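/- Over the Gaussian integers ℤ[i], every positive semi-definite Hermitian matrix of the form [[1,0,a,b],[0,1,c,d],[ā,c̄,2,1],[b̄,d̄,1,2]] with a,b,c,d ∈ ℤ[i] defines a lattice isometric to one of ⟨1,1,1,0⟩, ⟨1,1,1,1⟩, or ⟨1,1⟩ ⊥ [[2,1],[1,2]]; consequently any positive definite Hermitian ℤ[i]-lattice representing both ⟨1,1⟩ and [[2,1],[1,2]] contains a sublattice isometric to ⟨1,1,1⟩ or to ⟨1,1⟩ ⊥ [[2,1],[1,2]]. -/

import Mathlib

open Complex Matrix
open scoped ComplexOrder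

/-- ω for ℚ(√-m): √-m if m ≡ 1,2 (mod 4), (1+√-m)/2 if m ≡ 3 (mod 4). -/
noncomputable def omg (m : ℕ) : ℂ :=
  if m % 4 = 3 then (1 + Real.sqrt m * Complex.I) / 2 else Real.sqrt m * Complex.I

/-- The Gaussian integers ℤ[i], as a subring of ℂ (m = 1). -/
noncomputable def ringO (m : ℕ) : Subalgebra ℤ ℂ := Algebra.adjoin ℤ {omg m}

/-- Representation of Hermitian ℤ[i]-lattices via Gram matrices. -/
def Represents {d k : ℕ} (M : Matrix (Fin d) (Fin d) ℂ) (B : Matrix (Fin k) (Fin k) ℂ) :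
    Prop :=
  ∃ X : Matrix (Fin k) (Fin d) ℂ, (∀ i j, X i j ∈ ringO 1) ∧ B = X * M * Xᴴ

/-- Isometry: mutual representation. -/
def Isometric' {d k : ℕ} (M : Matrix (Fin d) (Fin d) ℂ) (B : Matrix (Fin k) (Fin k) ℂ) :
    Prop :=
  Represents M B ∧ Represents B M

/-!
A Gram matrix `[[1, C], [Cᴴ, A₂]]`, with `A₂ = [[2, 1], [1, 2]]`, splits as `⟨1,1⟩ ⊥ S` with
`S = A₂ - Cᴴ C` positive semidefinite and with entries in `ℤ[i]`. Its diagonal entries lie in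
`{0, 1, 2}`, and a diagonal entry `2` forces the off-diagonal entry to be `1`. If some diagonal
entry is `1`, then `S ≅ ⟨1, det S⟩` and `det S ∈ {0, 1}`. Otherwise either `S = A₂`, or `S = 0`;
the latter would give `|det C|² = det A₂ = 3`, but `3` is not a sum of two squares.
-/

theorem mem_ringO_one_iff {z : ℂ} : z ∈ ringO 1 ↔ ∃ w : GaussianInt, (w : ℂ) = z := by
  have omg_one : omg 1 = I := by simp [omg]
  rw [ringO, omg_one]
  constructor
  · intro hz
    have hle : Algebra.adjoin ℤ {I} ≤ subalgebraOfSubring GaussianInt.toComplex.range :=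
      Algebra.adjoin_le (Set.singleton_subset_iff.2 ⟨⟨0, 1⟩, by simp [GaussianInt.toComplex_def]⟩)
    exact hle hz
  · rintro ⟨w, rfl⟩
    rw [GaussianInt.toComplex_def]
    exact add_mem (intCast_mem _ _)
      (mul_mem (intCast_mem _ _) (Algebra.self_mem_adjoin_singleton ℤ I))

theorem star_mem_ringO_one {z : ℂ} (hz : z ∈ ringO 1) : star z ∈ ringO 1 := by
  obtain ⟨w, rfl⟩ := mem_ringO_one_iff.1 hz
  exact mem_ringO_one_iff.2 ⟨star w, GaussianInt.toComplex_star w⟩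

theorem exists_natCast_eq_of_mem_ringO_one {z : ℂ} (hz : z ∈ ringO 1) (hz0 : 0 ≤ z) :
    ∃ n : ℕ, z = n := by
  obtain ⟨w, rfl⟩ := mem_ringO_one_iff.1 hz
  obtain ⟨hre, him⟩ := Complex.nonneg_iff.1 hz0
  rw [← GaussianInt.intCast_re] at hre
  rw [← GaussianInt.intCast_im] at him
  have him : w.im = 0 := by exact_mod_cast him.symm
  lift w.re to ℕ using by exact_mod_cast hre with n hn
  exact ⟨n, by simp [GaussianInt.toComplex_def, him, ← hn]⟩

theorem star_mul_self_ne_natCast_of_mod_four_eq_three {z : ℂ} (hz : z ∈ ringO 1) {n : ℕ}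
    (hn : n % 4 = 3) : star z * z ≠ n := by
  obtain ⟨w, rfl⟩ := mem_ringO_one_iff.1 hz
  intro h
  have hsq : w.re ^ 2 + w.im ^ 2 = (n : ℤ) := by
    have hnorm : star (w : ℂ) * w = (w.norm : ℂ) := by
      rw [GaussianInt.intCast_complex_norm, normSq_eq_conj_mul_self, starRingEnd_apply]
    have hnorm : w.norm = n := by exact_mod_cast hnorm.symm.trans h
    rw [← hnorm, Zsqrtd.norm_def]
    ring
  have sq_mod_four (x : ℤ) : x ^ 2 % 4 = 0 ∨ x ^ 2 % 4 = 1 := by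
    rcases Int.even_or_odd' x with ⟨k, rfl | rfl⟩ <;> ring_nf <;> omega
  rcases sq_mod_four w.re with hre | hre <;> rcases sq_mod_four w.im with him | him <;> omega

/-- A complex matrix all of whose entries are Gaussian integers. -/
def HasGaussianEntries {ι κ : Type*} (X : Matrix ι κ ℂ) : Prop :=
  ∀ i j, X i j ∈ ringO 1

namespace HasGaussianEntries

variable {ι κ ι' κ' : Type*}

theorem zero : HasGaussianEntries (0 : Matrix ι κ ℂ) := fun _ _ => zero_mem _

theorem one [DecidableEq ι] : HasGaussianEntries (1 : Matrix ι ι ℂ) := fun i j => by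
  rw [Matrix.one_apply]
  split_ifs
  exacts [one_mem _, zero_mem _]

theorem neg {X : Matrix ι κ ℂ} (hX : HasGaussianEntries X) : HasGaussianEntries (-X) :=
  fun i j => neg_mem (hX i j)

theorem sub {X Y : Matrix ι κ ℂ} (hX : HasGaussianEntries X) (hY : HasGaussianEntries Y) :
    HasGaussianEntries (X - Y) :=
  fun i j => sub_mem (hX i j) (hY i j)

theorem mul [Fintype κ] {X : Matrix ι κ ℂ} {Y : Matrix κ ι' ℂ} (hX : HasGaussianEntries X)
    (hY : HasGaussianEntries Y) : HasGaussianEntries (X * Y) :=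
  fun i j => sum_mem fun k _ => mul_mem (hX i k) (hY k j)

theorem conjTranspose {X : Matrix ι κ ℂ} (hX : HasGaussianEntries X) : HasGaussianEntries Xᴴ :=
  fun i j => star_mem_ringO_one (hX j i)

theorem submatrix {X : Matrix ι κ ℂ} (hX : HasGaussianEntries X) (f : ι' → ι) (g : κ' → κ) :
    HasGaussianEntries (X.submatrix f g) :=
  fun i j => hX (f i) (g j)

theorem fromBlocks {A : Matrix ι κ ℂ} {B : Matrix ι κ' ℂ} {C : Matrix ι' κ ℂ}
    {D : Matrix ι' κ' ℂ} (hA : HasGaussianEntries A) (hB : HasGaussianEntries B)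
    (hC : HasGaussianEntries C) (hD : HasGaussianEntries D) :
    HasGaussianEntries (Matrix.fromBlocks A B C D) := by
  rintro (i | i) (j | j)
  exacts [hA i j, hB i j, hC i j, hD i j]

theorem det [Fintype ι] [DecidableEq ι] {X : Matrix ι ι ℂ} (hX : HasGaussianEntries X) :
    X.det ∈ ringO 1 := by
  rw [Matrix.det_apply]
  exact sum_mem fun σ _ => zsmul_mem (prod_mem fun i _ => hX (σ i) i) _

end HasGaussianEntries

section Representation

variable {k l m n : ℕ}

theorem Represents.trans {A : Matrix (Fin l) (Fin l) ℂ} {B : Matrix (Fin m) (Fin m) ℂ}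
    {C : Matrix (Fin n) (Fin n) ℂ} (hAB : Represents A B) (hBC : Represents B C) :
    Represents A C := by
  obtain ⟨X, hX, rfl⟩ := hAB
  obtain ⟨Y, hY, rfl⟩ := hBC
  exact ⟨Y * X, HasGaussianEntries.mul hY hX, by
    simp only [Matrix.conjTranspose_mul, Matrix.mul_assoc]⟩

theorem Isometric'.trans {A : Matrix (Fin l) (Fin l) ℂ} {B : Matrix (Fin m) (Fin m) ℂ}
    {C : Matrix (Fin n) (Fin n) ℂ} (hAB : Isometric' A B) (hBC : Isometric' B C) :
    Isometric' A C :=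
  ⟨hAB.1.trans hBC.1, hBC.2.trans hAB.2⟩

theorem Represents.posSemidef {A : Matrix (Fin l) (Fin l) ℂ} {B : Matrix (Fin m) (Fin m) ℂ}
    (hAB : Represents A B) (hA : A.PosSemidef) : B.PosSemidef := by
  obtain ⟨X, -, rfl⟩ := hAB
  exact hA.mul_mul_conjTranspose_same X

theorem represents_submatrix (M : Matrix (Fin l) (Fin l) ℂ) (f : Fin k → Fin l) :
    Represents M (M.submatrix f f) :=
  ⟨(1 : Matrix (Fin l) (Fin l) ℂ).submatrix f id, HasGaussianEntries.one.submatrix f id, by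
    ext i j
    simp [Matrix.mul_apply, Matrix.one_apply]⟩

theorem isometric_submatrix_equiv (M : Matrix (Fin l) (Fin l) ℂ) (e : Fin k ≃ Fin l) :
    Isometric' M (M.submatrix e e) :=
  ⟨represents_submatrix M e, by simpa using represents_submatrix (M.submatrix e e) e.symm⟩

theorem represents_submatrix_of_eq {ι κ : Type*} [Fintype ι] {M : Matrix ι ι ℂ}
    {N : Matrix κ κ ℂ} {X : Matrix κ ι ℂ} (hX : HasGaussianEntries X) (h : N = X * M * Xᴴ)
    (e : Fin l ≃ ι) (f : Fin m → κ) : Represents (M.submatrix e e) (N.submatrix f f) :=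
  ⟨X.submatrix f e, hX.submatrix f e, by
    rw [h, Matrix.conjTranspose_submatrix, Matrix.submatrix_mul_equiv,
      Matrix.submatrix_mul_equiv]⟩

/-- The Gram matrix `[[A, C], [Cᴴ, B]]` of a family of `m + n` vectors, where `A` and `B` are the
Gram matrices of the first `m` and the last `n` vectors and `C` collects the mixed products. The
orthogonal sum `A ⊥ B` is `joinGram A 0 B`. -/
def joinGram (A : Matrix (Fin m) (Fin m) ℂ) (C : Matrix (Fin m) (Fin n) ℂ)
    (B : Matrix (Fin n) (Fin n) ℂ) : Matrix (Fin (m + n)) (Fin (m + n)) ℂ :=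
  (fromBlocks A C Cᴴ B).submatrix finSumFinEquiv.symm finSumFinEquiv.symm

theorem Represents.joinGram_zero (A : Matrix (Fin m) (Fin m) ℂ) {B : Matrix (Fin n) (Fin n) ℂ}
    {B' : Matrix (Fin l) (Fin l) ℂ} (hB : Represents B B') :
    Represents (joinGram A 0 B) (joinGram A 0 B') := by
  obtain ⟨X, hX, rfl⟩ := hB
  exact represents_submatrix_of_eq
    (HasGaussianEntries.fromBlocks .one .zero .zero hX)
    (by simp [fromBlocks_multiply, fromBlocks_conjTranspose]) _ _

theorem Isometric'.joinGram_zero (A : Matrix (Fin m) (Fin m) ℂ) {B : Matrix (Fin n) (Fin n) ℂ}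
    {B' : Matrix (Fin l) (Fin l) ℂ} (hB : Isometric' B B') :
    Isometric' (joinGram A 0 B) (joinGram A 0 B') :=
  ⟨hB.1.joinGram_zero A, hB.2.joinGram_zero A⟩

theorem isometric_joinGram_one {C : Matrix (Fin m) (Fin n) ℂ} (hC : HasGaussianEntries C)
    (D : Matrix (Fin n) (Fin n) ℂ) :
    Isometric' (joinGram 1 C D) (joinGram (1 : Matrix (Fin m) (Fin m) ℂ) 0 (D - Cᴴ * C)) := by
  constructor
  · exact represents_submatrix_of_eq
      (HasGaussianEntries.fromBlocks .one .zero hC.conjTranspose.neg .one)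
      (by simp [fromBlocks_multiply, fromBlocks_conjTranspose, sub_eq_neg_add]) _ _
  · exact represents_submatrix_of_eq
      (HasGaussianEntries.fromBlocks .one .zero hC.conjTranspose .one)
      (by simp [fromBlocks_multiply, fromBlocks_conjTranspose]) _ _

theorem posSemidef_joinGram_one_iff {C : Matrix (Fin m) (Fin n) ℂ}
    {D : Matrix (Fin n) (Fin n) ℂ} :
    (joinGram 1 C D).PosSemidef ↔ (D - Cᴴ * C).PosSemidef := by
  let _ : Invertible (1 : Matrix (Fin m) (Fin m) ℂ) := invertibleOne
  rw [joinGram, posSemidef_submatrix_equiv, PosDef.fromBlocks₁₁ C D PosDef.one, inv_one,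
    Matrix.mul_one]

theorem exists_represents_joinGram {P : Matrix (Fin l) (Fin l) ℂ} (hP : HasGaussianEntries P)
    (hherm : P.IsHermitian) {A : Matrix (Fin m) (Fin m) ℂ} {B : Matrix (Fin n) (Fin n) ℂ}
    (hA : Represents P A) (hB : Represents P B) :
    ∃ C, HasGaussianEntries C ∧ Represents P (joinGram A C B) := by
  obtain ⟨X, hX, rfl⟩ := hA
  obtain ⟨Y, hY, rfl⟩ := hB
  refine ⟨X * P * Yᴴ, (HasGaussianEntries.mul hX hP).mul (HasGaussianEntries.conjTranspose hY), ?_⟩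
  have hjoin : fromBlocks (X * P * Xᴴ) (X * P * Yᴴ) (X * P * Yᴴ)ᴴ (Y * P * Yᴴ) =
      fromRows X Y * P * (fromRows X Y)ᴴ := by
    simp [conjTranspose_fromRows_eq_fromCols_conjTranspose, fromRows_mul, conjTranspose_mul,
      hherm.eq, Matrix.mul_assoc]
  refine represents_submatrix_of_eq (e := Equiv.refl _) ?_ hjoin _
  rintro (i | i) j
  exacts [hX i j, hY i j]

theorem joinGram_one_one (A C B : Matrix (Fin 1) (Fin 1) ℂ) :
    joinGram A C B = !![A 0 0, C 0 0; star (C 0 0), B 0 0] := by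
  ext i j
  fin_cases i <;> fin_cases j <;> rfl

theorem joinGram_two_two (A C B : Matrix (Fin 2) (Fin 2) ℂ) :
    joinGram A C B = !![A 0 0, A 0 1, C 0 0, C 0 1; A 1 0, A 1 1, C 1 0, C 1 1;
      star (C 0 0), star (C 1 0), B 0 0, B 0 1; star (C 0 1), star (C 1 1), B 1 0, B 1 1] := by
  ext i j
  fin_cases i <;> fin_cases j <;> rfl

end Representation

section Binary

variable {S : Matrix (Fin 2) (Fin 2) ℂ}

theorem isometric_diagonal_det_of_apply_zero_eq_one (hS : HasGaussianEntries S)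
    (hherm : S.IsHermitian) (h : S 0 0 = 1) : Isometric' S (diagonal ![1, S.det]) := by
  have hjoin : S = joinGram 1 !![S 0 1] !![S 1 1] := by
    rw [joinGram_one_one, eta_fin_two S, h, ← hherm.apply 1 0]
    simp
  have hcompl : diagonal ![1, S.det] = joinGram 1 0 (!![S 1 1] - !![S 0 1]ᴴ * !![S 0 1]) := by
    rw [joinGram_one_one, det_fin_two, h, ← hherm.apply 1 0]
    ext i j
    fin_cases i <;> fin_cases j <;> simp [mul_comm, Matrix.mul_apply]
  rw [hcompl]
  nth_rw 1 [hjoin]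
  exact isometric_joinGram_one (fun _ _ => by simpa using hS 0 1) _

theorem isometric_diagonal_det_of_apply_eq_one (hS : HasGaussianEntries S)
    (hherm : S.IsHermitian) {i : Fin 2} (h : S i i = 1) :
    Isometric' S (diagonal ![1, S.det]) := by
  let e := Equiv.swap 0 i
  have hswap := isometric_diagonal_det_of_apply_zero_eq_one (hS.submatrix e e)
    (hherm.submatrix e) (by simpa [e] using h)
  rw [det_submatrix_equiv_self] at hswap
  exact (isometric_submatrix_equiv S e).trans hswap

theorem exists_natCast_entries_det_of_posSemidef (hS : HasGaussianEntries S) (hpsd : S.PosSemidef) :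
    ∃ p q r e : ℕ, S 0 0 = p ∧ S 1 1 = q ∧ S 0 1 * star (S 0 1) = r ∧ S.det = e ∧
      e + r = p * q := by
  obtain ⟨p, hp⟩ := exists_natCast_eq_of_mem_ringO_one (hS 0 0) hpsd.diag_nonneg
  obtain ⟨q, hq⟩ := exists_natCast_eq_of_mem_ringO_one (hS 1 1) hpsd.diag_nonneg
  obtain ⟨r, hr⟩ := exists_natCast_eq_of_mem_ringO_one
    (mul_mem (hS 0 1) (star_mem_ringO_one (hS 0 1))) (mul_star_self_nonneg _)
  obtain ⟨e, he⟩ := exists_natCast_eq_of_mem_ringO_one hS.det hpsd.det_nonneg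
  refine ⟨p, q, r, e, hp, hq, hr, he, ?_⟩
  have hdet : S.det + S 0 1 * star (S 0 1) = S 0 0 * S 1 1 := by
    rw [det_fin_two, hpsd.1.apply 1 0, sub_add_cancel]
  rw [he, hr, hp, hq] at hdet
  exact_mod_cast hdet

end Binary

/-- The Gram matrix `[[2, 1], [1, 2]]` of the root lattice `A₂`. -/
def gramA₂ : Matrix (Fin 2) (Fin 2) ℂ := !![2, 1; 1, 2]

theorem hasGaussianEntries_gramA₂ : HasGaussianEntries gramA₂ := by
  intro i j
  fin_cases i <;> fin_cases j <;> simp [gramA₂, ofNat_mem]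

/-- If `C` holds the products of an orthonormal family with a basis of `A₂`, this is the Gram
matrix of the projection of that basis to the orthogonal complement of the family. -/
def residualGram {n : ℕ} (C : Matrix (Fin n) (Fin 2) ℂ) : Matrix (Fin 2) (Fin 2) ℂ :=
  gramA₂ - Cᴴ * C

section Residual

variable {n : ℕ} {C : Matrix (Fin n) (Fin 2) ℂ}

theorem hasGaussianEntries_residualGram (hC : HasGaussianEntries C) :
    HasGaussianEntries (residualGram C) :=
  hasGaussianEntries_gramA₂.sub (hC.conjTranspose.mul hC)

theorem residualGram_apply_self (C : Matrix (Fin n) (Fin 2) ℂ) (j : Fin 2) :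
    residualGram C j j = 2 - star (C.col j) ⬝ᵥ C.col j := by
  fin_cases j <;> rfl

theorem residualGram_apply_self_le_two (C : Matrix (Fin n) (Fin 2) ℂ) (j : Fin 2) :
    residualGram C j j ≤ 2 := by
  rw [residualGram_apply_self]
  exact sub_le_self 2 (dotProduct_star_self_nonneg _)

theorem residualGram_apply_zero_one_of_apply_self_eq_two {j : Fin 2}
    (h : residualGram C j j = 2) : residualGram C 0 1 = 1 := by
  have hcol : C.col j = 0 := by
    rw [residualGram_apply_self, sub_eq_self] at h
    exact dotProduct_star_self_eq_zero.1 h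
  have hprod : (Cᴴ * C) 0 1 = 0 := by
    rw [Matrix.mul_apply]
    refine Finset.sum_eq_zero fun i _ => ?_
    have hij : C i j = 0 := congrFun hcol i
    fin_cases j <;> simp_all
  simp [residualGram, gramA₂, hprod]

theorem residualGram_ne_zero {C : Matrix (Fin 2) (Fin 2) ℂ} (hC : HasGaussianEntries C) :
    residualGram C ≠ 0 := by
  intro h
  have hdet : star C.det * C.det = (3 : ℕ) := by
    rw [← det_conjTranspose, ← det_mul, ← sub_eq_zero.1 h, gramA₂, det_fin_two_of]
    norm_num
  exact star_mul_self_ne_natCast_of_mod_four_eq_three hC.det rfl hdet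

theorem exists_natCast_diag_det_residualGram {C : Matrix (Fin 2) (Fin 2) ℂ}
    (hC : HasGaussianEntries C) (hpsd : (residualGram C).PosSemidef) :
    ∃ p q e : ℕ, residualGram C 0 0 = p ∧ residualGram C 1 1 = q ∧ (residualGram C).det = e ∧
      ((p = 1 ∨ q = 1) ∧ (e = 0 ∨ e = 1) ∨ p = 2 ∧ q = 2) := by
  obtain ⟨p, q, r, e, hp, hq, hr, he, hdet⟩ :=
    exists_natCast_entries_det_of_posSemidef (hasGaussianEntries_residualGram hC) hpsd
  refine ⟨p, q, e, hp, hq, he, ?_⟩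
  have hp2 : p ≤ 2 := by exact_mod_cast hp ▸ residualGram_apply_self_le_two C 0
  have hq2 : q ≤ 2 := by exact_mod_cast hq ▸ residualGram_apply_self_le_two C 1
  have hr_of_apply_eq_two {j} (h : residualGram C j j = 2) : r = 1 := by
    rw [residualGram_apply_zero_one_of_apply_self_eq_two h] at hr
    simpa [eq_comm] using hr
  have hr_of_p (h : p = 2) : r = 1 := hr_of_apply_eq_two (j := 0) (by simp [hp, h])
  have hr_of_q (h : q = 2) : r = 1 := hr_of_apply_eq_two (j := 1) (by simp [hq, h])
  have hpq : ¬(p = 0 ∧ q = 0 ∧ r = 0) := by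
    rintro ⟨rfl, rfl, rfl⟩
    have hoff : residualGram C 0 1 = 0 := by simpa using hr
    refine residualGram_ne_zero hC ?_
    rw [eta_fin_two (residualGram C), hp, hq, ← hpsd.1.apply 1 0, hoff]
    ext i j
    fin_cases i <;> fin_cases j <;> simp
  interval_cases p <;> interval_cases q <;> omega

theorem residualGram_isometric_diagonal_or_eq_gramA₂ {C : Matrix (Fin 2) (Fin 2) ℂ}
    (hC : HasGaussianEntries C) (hpsd : (residualGram C).PosSemidef) :
    Isometric' (residualGram C) (diagonal ![1, 0]) ∨
      Isometric' (residualGram C) (diagonal ![1, 1]) ∨ residualGram C = gramA₂ := by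
  obtain ⟨p, q, e, hp, hq, he, ⟨hunit, hdet⟩ | ⟨rfl, rfl⟩⟩ :=
    exists_natCast_diag_det_residualGram hC hpsd
  · have hone : ∃ j, residualGram C j j = 1 :=
      hunit.elim (fun h => ⟨0, by simp [hp, h]⟩) (fun h => ⟨1, by simp [hq, h]⟩)
    obtain ⟨j, hj⟩ := hone
    have hiso := isometric_diagonal_det_of_apply_eq_one (hasGaussianEntries_residualGram hC)
      hpsd.1 hj
    rw [he] at hiso
    rcases hdet with rfl | rfl
    · exact .inl (by simpa using hiso)
    · exact .inr (.inl (by simpa using hiso))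
  · have hoff := residualGram_apply_zero_one_of_apply_self_eq_two (by simpa using hp)
    refine .inr (.inr ?_)
    rw [eta_fin_two (residualGram C), hp, hq, ← hpsd.1.apply 1 0, hoff]
    simp [gramA₂]

end Residual

theorem joinGram_one_zero_diagonal (e : ℂ) :
    joinGram (1 : Matrix (Fin 2) (Fin 2) ℂ) 0 (diagonal ![1, e]) = diagonal ![1, 1, 1, e] := by
  rw [joinGram_two_two]
  ext i j
  fin_cases i <;> fin_cases j <;> simp

theorem joinGram_one_gramA₂_classification {C : Matrix (Fin 2) (Fin 2) ℂ}
    (hC : HasGaussianEntries C) (hpsd : (joinGram 1 C gramA₂).PosSemidef) :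
    Isometric' (joinGram 1 C gramA₂) (diagonal ![1, 1, 1, 0]) ∨
      Isometric' (joinGram 1 C gramA₂) (1 : Matrix (Fin 4) (Fin 4) ℂ) ∨
      Isometric' (joinGram 1 C gramA₂)
        (joinGram (1 : Matrix (Fin 2) (Fin 2) ℂ) 0 gramA₂) := by
  have hsplit : Isometric' (joinGram 1 C gramA₂)
      (joinGram (1 : Matrix (Fin 2) (Fin 2) ℂ) 0 (residualGram C)) :=
    isometric_joinGram_one hC gramA₂
  have hone : diagonal ![(1 : ℂ), 1, 1, 1] = (1 : Matrix (Fin 4) (Fin 4) ℂ) := by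
    rw [← diagonal_one]
    congr 1
    ext i
    fin_cases i <;> rfl
  rcases residualGram_isometric_diagonal_or_eq_gramA₂ hC
    (posSemidef_joinGram_one_iff.1 hpsd) with h | h | h
  · exact .inl (joinGram_one_zero_diagonal 0 ▸ hsplit.trans (h.joinGram_zero 1))
  · have hiso := hsplit.trans (h.joinGram_zero 1)
    rw [joinGram_one_zero_diagonal, hone] at hiso
    exact .inr (.inl hiso)
  · rw [h] at hsplit
    exact .inr (.inr hsplit)

theorem represents_one_or_joinGram_zero_gramA₂ {d : ℕ} {P : Matrix (Fin d) (Fin d) ℂ}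
    (hP : HasGaussianEntries P) (hpsd : P.PosSemidef)
    (hone : Represents P (1 : Matrix (Fin 2) (Fin 2) ℂ)) (hA₂ : Represents P gramA₂) :
    Represents P (1 : Matrix (Fin 3) (Fin 3) ℂ) ∨
      Represents P (joinGram (1 : Matrix (Fin 2) (Fin 2) ℂ) 0 gramA₂) := by
  obtain ⟨C, hC, hjoin⟩ := exists_represents_joinGram hP hpsd.1 hone hA₂
  rcases joinGram_one_gramA₂_classification hC (hjoin.posSemidef hpsd) with h | h | h
  · refine .inl ((hjoin.trans h.1).trans ?_)
    convert represents_submatrix (diagonal ![(1 : ℂ), 1, 1, 0]) (Fin.castSucc (n := 3)) using 1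
    ext i j
    fin_cases i <;> fin_cases j <;> simp
  · refine .inl ((hjoin.trans h.1).trans ?_)
    rw [← submatrix_one Fin.castSucc (Fin.castSucc_injective 3)]
    exact represents_submatrix 1 _
  · exact .inr (hjoin.trans h.1)

theorem escalation_quaternary_gaussian :
    -- every positive semidefinite matrix of the given shape is isometric to
    -- ⟨1,1,1,0⟩, ⟨1,1,1,1⟩ or ⟨1,1⟩ ⊥ [[2,1],[1,2]]
    (∀ a b c d : ℂ, a ∈ ringO 1 → b ∈ ringO 1 → c ∈ ringO 1 → d ∈ ringO 1 →
      (!![(1 : ℂ), 0, a, b; 0, 1, c, d;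
          (starRingEnd ℂ) a, (starRingEnd ℂ) c, 2, 1;
          (starRingEnd ℂ) b, (starRingEnd ℂ) d, 1, 2]).PosSemidef →
      (Isometric' !![(1 : ℂ), 0, a, b; 0, 1, c, d;
          (starRingEnd ℂ) a, (starRingEnd ℂ) c, 2, 1;
          (starRingEnd ℂ) b, (starRingEnd ℂ) d, 1, 2]
          (Matrix.diagonal ![(1 : ℂ), 1, 1, 0]) ∨
       Isometric' !![(1 : ℂ), 0, a, b; 0, 1, c, d;
          (starRingEnd ℂ) a, (starRingEnd ℂ) c, 2, 1;
          (starRingEnd ℂ) b, (starRingEnd ℂ) d, 1, 2]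
          (1 : Matrix (Fin 4) (Fin 4) ℂ) ∨
       Isometric' !![(1 : ℂ), 0, a, b; 0, 1, c, d;
          (starRingEnd ℂ) a, (starRingEnd ℂ) c, 2, 1;
          (starRingEnd ℂ) b, (starRingEnd ℂ) d, 1, 2]
          !![(1 : ℂ), 0, 0, 0; 0, 1, 0, 0; 0, 0, 2, 1; 0, 0, 1, 2])) ∧
    -- hence any lattice representing ⟨1,1⟩ and [[2,1],[1,2]] contains a sublattice
    -- isometric to ⟨1,1,1⟩ or to ⟨1,1⟩ ⊥ [[2,1],[1,2]]
    (∀ (d : ℕ) (P : Matrix (Fin d) (Fin d) ℂ),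
      (∀ i j, P i j ∈ ringO 1) → P.PosSemidef →
      Represents P (1 : Matrix (Fin 2) (Fin 2) ℂ) →
      Represents P !![(2 : ℂ), 1; 1, 2] →
      (Represents P (1 : Matrix (Fin 3) (Fin 3) ℂ) ∨
       Represents P !![(1 : ℂ), 0, 0, 0; 0, 1, 0, 0; 0, 0, 2, 1; 0, 0, 1, 2])) := by
  have hsum : joinGram (1 : Matrix (Fin 2) (Fin 2) ℂ) 0 gramA₂ =
      !![1, 0, 0, 0; 0, 1, 0, 0; 0, 0, 2, 1; 0, 0, 1, 2] := by
    simp [joinGram_two_two, gramA₂]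
  rw [← hsum]
  refine ⟨fun a b c d ha hb hc hd hpsd => ?_, fun d P hP hpsd hone hA₂ =>
    represents_one_or_joinGram_zero_gramA₂ hP hpsd hone hA₂⟩
  have hC : HasGaussianEntries !![a, b; c, d] := by
    intro i j
    fin_cases i <;> fin_cases j <;> assumption
  have hgram : joinGram 1 !![a, b; c, d] gramA₂ = !![1, 0, a, b; 0, 1, c, d;
      (starRingEnd ℂ) a, (starRingEnd ℂ) c, 2, 1; (starRingEnd ℂ) b, (starRingEnd ℂ) d, 1, 2] := by
    simp [joinGram_two_two, gramA₂]
  exact hgram ▸ joinGram_one_gramA₂_classification hC (hgram ▸ hpsd)
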